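/- arXiv:2211.00432 — 7 statements merged into one kernel-verified Lean document; each statement's English description precedes it below -/
import Mathlib

section
/- Let E be a topological space. Player α has a winning strategy in the Banach–Mazur game on E if and only if player α' has a winning strategy in the tandem Banach–Mazur game on E. -/
universe u v w

section BanachMazur

variable {E : Type*} [TopologicalSpace E]

/-- The `n`-th move of a play `V₁ ⊇ U₁ ⊇ V₂ ⊇ U₂ ⊇ …` of the Banach–Mazur game:
the moves of player β (the sets `Vᵢ`) sit at even indices and the moves of
player α (the sets `Uᵢ`) at odd ones. -/
def bmMove (V U : ℕ → Set E) (n : ℕ) : Set E :=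
  if n % 2 = 0 then V (n / 2) else U (n / 2)

/-- The history of the first `n` moves of a Banach–Mazur play (as a function that is
`∅` from index `n` onwards, so that a strategy can only use the past moves). -/
def bmHist (V U : ℕ → Set E) (n : ℕ) : ℕ → Set E :=
  fun i => if i < n then bmMove V U i else ∅

/-- A legal Banach–Mazur history of length `n`: the moves are nonempty open sets,
each contained in all the previous ones. -/
def BMLegalHist (n : ℕ) (h : ℕ → Set E) : Prop :=
  (∀ i < n, IsOpen (h i) ∧ (h i).Nonempty) ∧
    ∀ i j : ℕ, i < j → j < n → h j ⊆ h i

/-- A strategy for player β in the Banach–Mazur game: to every legal history of even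
length it assigns a nonempty open subset of the last move (its first move `V₁` is
unconstrained). -/
def IsBMBetaStrat (σ : ℕ → (ℕ → Set E) → Set E) : Prop :=
  ∀ (n : ℕ) (h : ℕ → Set E), BMLegalHist n h → n % 2 = 0 →
    IsOpen (σ n h) ∧ (σ n h).Nonempty ∧ (0 < n → σ n h ⊆ h (n - 1))

/-- A strategy for player α in the Banach–Mazur game: to every legal history of odd
length it assigns a nonempty open subset of the last move. -/
def IsBMAlphaStrat (σ : ℕ → (ℕ → Set E) → Set E) : Prop :=
  ∀ (n : ℕ) (h : ℕ → Set E), BMLegalHist n h → n % 2 = 1 →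
    IsOpen (σ n h) ∧ (σ n h).Nonempty ∧ σ n h ⊆ h (n - 1)

/-- The play `(V, U)` follows the β-strategy `σ`. -/
def BMFollowsBeta (σ : ℕ → (ℕ → Set E) → Set E) (V U : ℕ → Set E) : Prop :=
  ∀ k : ℕ, V k = σ (2 * k) (bmHist V U (2 * k))

/-- The play `(V, U)` follows the α-strategy `σ`. -/
def BMFollowsAlpha (σ : ℕ → (ℕ → Set E) → Set E) (V U : ℕ → Set E) : Prop :=
  ∀ k : ℕ, U k = σ (2 * k + 1) (bmHist V U (2 * k + 1))

/-- `σ` is a winning strategy for player α in the Banach–Mazur game: it is a strategy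
for α, and every play in which α follows `σ` and β plays legally (nonempty open sets,
each contained in the preceding move of α) satisfies `⋂ n, U n ≠ ∅`. -/
def BMAlphaWinning (σ : ℕ → (ℕ → Set E) → Set E) : Prop :=
  IsBMAlphaStrat σ ∧
    ∀ V U : ℕ → Set E, BMFollowsAlpha σ V U →
      (IsOpen (V 0) ∧ (V 0).Nonempty) →
      (∀ k : ℕ, IsOpen (V (k + 1)) ∧ (V (k + 1)).Nonempty ∧ V (k + 1) ⊆ U k) →
      (⋂ k, U k).Nonempty

/-- `σ` is a winning strategy for player β in the Banach–Mazur game: it is a strategy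
for β, and every play in which β follows `σ` and α plays legally satisfies
`⋂ n, U n = ∅`. -/
def BMBetaWinning (σ : ℕ → (ℕ → Set E) → Set E) : Prop :=
  IsBMBetaStrat σ ∧
    ∀ V U : ℕ → Set E, BMFollowsBeta σ V U →
      (∀ k : ℕ, IsOpen (U k) ∧ (U k).Nonempty ∧ U k ⊆ V k) →
      (⋂ k, U k) = ∅

end BanachMazur

section Tandem

variable {E : Type*} [TopologicalSpace E]

/-- The `n`-th move of a play of the tandem Banach–Mazur game, which is played in
the order `V₁, V₁', W₁, W₁', V₂, V₂', W₂, W₂', …` : player β' chooses the sets `Vᵢ`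
(indices `≡ 0 [MOD 4]`) and `Wᵢ` (indices `≡ 2 [MOD 4]`), player α' chooses the sets
`Vᵢ'` (indices `≡ 1 [MOD 4]`) and `Wᵢ'` (indices `≡ 3 [MOD 4]`). -/
def tandemMove (V V' W W' : ℕ → Set E) (n : ℕ) : Set E :=
  if n % 4 = 0 then V (n / 4)
  else if n % 4 = 1 then V' (n / 4)
  else if n % 4 = 2 then W (n / 4)
  else W' (n / 4)

/-- The history of the first `n` moves of a tandem play (as a function that is `∅`
from index `n` onwards, so that a strategy can only use the past moves). -/
def tandemHist (V V' W W' : ℕ → Set E) (n : ℕ) : ℕ → Set E :=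
  fun i => if i < n then tandemMove V V' W W' i else ∅

/-- A legal tandem history of length `n`: all moves are nonempty open sets, the moves
on the `V`-board (indices `≡ 0, 1 [MOD 4]`) are nested decreasingly, and so are the
moves on the `W`-board (indices `≡ 2, 3 [MOD 4]`). -/
def TandemLegalHist (n : ℕ) (h : ℕ → Set E) : Prop :=
  (∀ i < n, IsOpen (h i) ∧ (h i).Nonempty) ∧
  (∀ i j : ℕ, i < j → j < n → i % 4 < 2 → j % 4 < 2 → h j ⊆ h i) ∧
  (∀ i j : ℕ, i < j → j < n → 2 ≤ i % 4 → 2 ≤ j % 4 → h j ⊆ h i)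

/-- A strategy for player β' in the tandem game: to every legal history of even length
it assigns a nonempty open set, contained in the previous move on the same board
(the first moves `V₁` and `W₁`, at positions `0` and `2`, are unconstrained). -/
def IsTandemBetaStrat (σ : ℕ → (ℕ → Set E) → Set E) : Prop :=
  ∀ (n : ℕ) (h : ℕ → Set E), TandemLegalHist n h → n % 2 = 0 →
    IsOpen (σ n h) ∧ (σ n h).Nonempty ∧ (4 ≤ n → σ n h ⊆ h (n - 3))

/-- A strategy for player α' in the tandem game: to every legal history of odd length
it assigns a nonempty open subset of the immediately preceding move. -/
def IsTandemAlphaStrat (σ : ℕ → (ℕ → Set E) → Set E) : Prop :=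
  ∀ (n : ℕ) (h : ℕ → Set E), TandemLegalHist n h → n % 2 = 1 →
    IsOpen (σ n h) ∧ (σ n h).Nonempty ∧ σ n h ⊆ h (n - 1)

/-- The play `(V, V', W, W')` follows the β'-strategy `σ`. -/
def TandemFollowsBeta (σ : ℕ → (ℕ → Set E) → Set E) (V V' W W' : ℕ → Set E) : Prop :=
  ∀ k : ℕ, V k = σ (4 * k) (tandemHist V V' W W' (4 * k)) ∧
    W k = σ (4 * k + 2) (tandemHist V V' W W' (4 * k + 2))

/-- The play `(V, V', W, W')` follows the α'-strategy `σ`. -/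
def TandemFollowsAlpha (σ : ℕ → (ℕ → Set E) → Set E) (V V' W W' : ℕ → Set E) : Prop :=
  ∀ k : ℕ, V' k = σ (4 * k + 1) (tandemHist V V' W W' (4 * k + 1)) ∧
    W' k = σ (4 * k + 3) (tandemHist V V' W W' (4 * k + 3))

end Tandem

/-- `σ` is a winning strategy for player α' in the tandem Banach–Mazur game: it is a
strategy for α', and every play in which α' follows `σ` and β' plays legally
(nonempty open sets, each `V (k+1) ⊆ V' k` and `W (k+1) ⊆ W' k`) satisfies
`⋂ k, V k ≠ ∅` and `⋂ k, W k ≠ ∅`. -/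
def TandemAlphaWinning {E : Type*} [TopologicalSpace E] (σ : ℕ → (ℕ → Set E) → Set E) : Prop :=
  IsTandemAlphaStrat σ ∧
    ∀ V V' W W' : ℕ → Set E, TandemFollowsAlpha σ V V' W W' →
      (∀ k : ℕ, IsOpen (V k) ∧ (V k).Nonempty ∧ IsOpen (W k) ∧ (W k).Nonempty) →
      (∀ k : ℕ, V (k + 1) ⊆ V' k ∧ W (k + 1) ⊆ W' k) →
      (⋂ k, V k).Nonempty ∧ (⋂ k, W k).Nonempty

/-- `σ` is a winning strategy for player β' in the tandem Banach–Mazur game: it is a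
strategy for β', and in every play in which β' follows `σ` and α' plays legally
(nonempty open sets `V' k ⊆ V k`, `W' k ⊆ W k`) at least one of the intersections
`⋂ k, V k`, `⋂ k, W k` is empty. -/
def TandemBetaWinning {E : Type*} [TopologicalSpace E] (σ : ℕ → (ℕ → Set E) → Set E) : Prop :=
  IsTandemBetaStrat σ ∧
    ∀ V V' W W' : ℕ → Set E, TandemFollowsBeta σ V V' W W' →
      (∀ k : ℕ, IsOpen (V' k) ∧ (V' k).Nonempty ∧ IsOpen (W' k) ∧ (W' k).Nonempty) →
      (∀ k : ℕ, V' k ⊆ V k ∧ W' k ⊆ W k) →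
      (⋂ k, V k) = ∅ ∨ (⋂ k, W k) = ∅

section Legality

variable {E : Type*}

/-- Cut a sequence of moves off at position `n`. -/
def truncate (f : ℕ → Set E) (n : ℕ) : ℕ → Set E :=
  fun i => if i < n then f i else ∅

theorem truncate_congr {f g : ℕ → Set E} {n : ℕ} (hfg : ∀ i < n, f i = g i) :
    truncate f n = truncate g n := by
  funext i
  unfold truncate
  split_ifs with hi
  · exact hfg i hi
  · rfl

theorem truncate_apply_of_lt {f : ℕ → Set E} {n i : ℕ} (hi : i < n) : truncate f n i = f i :=
  if_pos hi

variable [TopologicalSpace E]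

theorem BMLegalHist.congr {f g : ℕ → Set E} {n : ℕ} (hf : BMLegalHist n f)
    (hfg : ∀ i < n, f i = g i) : BMLegalHist n g := by
  refine ⟨fun i hi => hfg i hi ▸ hf.1 i hi, fun i j hij hj => ?_⟩
  rw [← hfg i (hij.trans hj), ← hfg j hj]
  exact hf.2 i j hij hj

theorem TandemLegalHist.congr {f g : ℕ → Set E} {n : ℕ} (hf : TandemLegalHist n f)
    (hfg : ∀ i < n, f i = g i) : TandemLegalHist n g := by
  refine ⟨fun i hi => hfg i hi ▸ hf.1 i hi, fun i j hij hj => ?_, fun i j hij hj => ?_⟩ <;>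
    rw [← hfg i (hij.trans hj), ← hfg j hj]
  · exact hf.2.1 i j hij hj
  · exact hf.2.2 i j hij hj

theorem BMLegalHist.truncate {f : ℕ → Set E} {n : ℕ} (hf : BMLegalHist n f) :
    BMLegalHist n (truncate f n) :=
  hf.congr fun _ hi => (truncate_apply_of_lt hi).symm

theorem TandemLegalHist.truncate {f : ℕ → Set E} {n : ℕ} (hf : TandemLegalHist n f) :
    TandemLegalHist n (truncate f n) :=
  hf.congr fun _ hi => (truncate_apply_of_lt hi).symm

/-- A sequence each of whose moves is legal, provided the preceding ones are, is legal. -/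
theorem bmLegalHist_of_step {f : ℕ → Set E}
    (hf : ∀ m, BMLegalHist m f →
      IsOpen (f m) ∧ (f m).Nonempty ∧ (0 < m → f m ⊆ f (m - 1))) (n : ℕ) :
    BMLegalHist n f := by
  induction n with
  | zero => exact ⟨fun i hi => by omega, fun i j _ hj => by omega⟩
  | succ n ih =>
    obtain ⟨hopen, hne, hsub⟩ := hf n ih
    refine ⟨fun i hi => ?_, fun i j hij hj => ?_⟩
    · rcases Nat.lt_succ_iff_lt_or_eq.mp hi with hi | rfl
      · exact ih.1 i hi
      · exact ⟨hopen, hne⟩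
    · rcases Nat.lt_succ_iff_lt_or_eq.mp hj with hj | rfl
      · exact ih.2 i j hij hj
      · refine (hsub (by omega)).trans ?_
        rcases eq_or_ne i (j - 1) with rfl | hi
        · exact subset_rfl
        · exact ih.2 i (j - 1) (by omega) (by omega)

/-- A sequence each of whose first `N` moves is legal, provided the preceding ones are, is a
legal tandem history of length `N`. -/
theorem tandemLegalHist_of_step {f : ℕ → Set E} {N : ℕ}
    (hf : ∀ m < N, TandemLegalHist m f → IsOpen (f m) ∧ (f m).Nonempty ∧
      (m % 2 = 1 → f m ⊆ f (m - 1)) ∧ (m % 2 = 0 → 4 ≤ m → f m ⊆ f (m - 3))) :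
    TandemLegalHist N f := by
  induction N with
  | zero =>
    exact ⟨fun i hi => by omega, fun i j _ hj => by omega, fun i j _ hj => by omega⟩
  | succ n ih =>
    have hn : TandemLegalHist n f := ih fun m hm => hf m (by omega)
    obtain ⟨hopen, hne, hodd, heven⟩ := hf n (by omega) hn
    refine ⟨fun i hi => ?_, fun i j hij hj hi4 hj4 => ?_, fun i j hij hj hi4 hj4 => ?_⟩
    · rcases Nat.lt_succ_iff_lt_or_eq.mp hi with hi | rfl
      · exact hn.1 i hi
      · exact ⟨hopen, hne⟩
    · rcases Nat.lt_succ_iff_lt_or_eq.mp hj with hj | rfl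
      · exact hn.2.1 i j hij hj hi4 hj4
      · rcases Nat.mod_two_eq_zero_or_one j with hp | hp
        · refine (heven hp (by omega)).trans ?_
          rcases eq_or_ne i (j - 3) with rfl | hi
          · exact subset_rfl
          · exact hn.2.1 i (j - 3) (by omega) (by omega) hi4 (by omega)
        · refine (hodd hp).trans ?_
          rcases eq_or_ne i (j - 1) with rfl | hi
          · exact subset_rfl
          · exact hn.2.1 i (j - 1) (by omega) (by omega) hi4 (by omega)
    · rcases Nat.lt_succ_iff_lt_or_eq.mp hj with hj | rfl
      · exact hn.2.2 i j hij hj hi4 hj4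
      · rcases Nat.mod_two_eq_zero_or_one j with hp | hp
        · refine (heven hp (by omega)).trans ?_
          rcases eq_or_ne i (j - 3) with rfl | hi
          · exact subset_rfl
          · exact hn.2.2 i (j - 3) (by omega) (by omega) hi4 (by omega)
        · refine (hodd hp).trans ?_
          rcases eq_or_ne i (j - 1) with rfl | hi
          · exact subset_rfl
          · exact hn.2.2 i (j - 1) (by omega) (by omega) hi4 (by omega)

end Legality

section Moves

variable {E : Type*}

theorem bmMove_two_mul (V U : ℕ → Set E) (k : ℕ) : bmMove V U (2 * k) = V k := by
  simp [bmMove]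

theorem bmMove_two_mul_add_one (V U : ℕ → Set E) (k : ℕ) : bmMove V U (2 * k + 1) = U k := by
  rw [bmMove, if_neg (by omega)]
  congr 1
  omega

variable (V V' W W' : ℕ → Set E) (k : ℕ)

theorem tandemMove_four_mul : tandemMove V V' W W' (4 * k) = V k := by
  simp [tandemMove]

theorem tandemMove_four_mul_add_one : tandemMove V V' W W' (4 * k + 1) = V' k := by
  rw [tandemMove, if_neg (by omega), if_pos (by omega)]
  congr 1
  omega

theorem tandemMove_four_mul_add_two : tandemMove V V' W W' (4 * k + 2) = W k := by
  rw [tandemMove, if_neg (by omega), if_neg (by omega), if_pos (by omega)]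
  congr 1
  omega

theorem tandemMove_four_mul_add_three : tandemMove V V' W W' (4 * k + 3) = W' k := by
  rw [tandemMove, if_neg (by omega), if_neg (by omega), if_neg (by omega)]
  congr 1
  omega

end Moves

section OfBM

variable {E : Type*}

/-- The `V`-board of a tandem history, as a Banach–Mazur history. -/
def boardV (h : ℕ → Set E) : ℕ → Set E := fun i => h (4 * (i / 2) + i % 2)

/-- The `W`-board of a tandem history, as a Banach–Mazur history. -/
def boardW (h : ℕ → Set E) : ℕ → Set E := fun i => h (4 * (i / 2) + i % 2 + 2)

/-- The tandem strategy that plays `σ` on each board separately. -/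
def tandemOfBM (σ : ℕ → (ℕ → Set E) → Set E) (n : ℕ) (h : ℕ → Set E) : Set E :=
  if n % 4 = 1 then σ (2 * (n / 4) + 1) (boardV h) else σ (2 * (n / 4) + 1) (boardW h)

theorem boardV_tandemHist (V V' W W' : ℕ → Set E) (k : ℕ) :
    boardV (tandemHist V V' W W' (4 * k + 1)) = bmHist V V' (2 * k + 1) := by
  funext i
  obtain ⟨j, rfl | rfl⟩ := i.even_or_odd'
  · have hi : 4 * (2 * j / 2) + 2 * j % 2 = 4 * j := by omega
    simp only [boardV, tandemHist, bmHist, hi, tandemMove_four_mul, bmMove_two_mul]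
    exact if_congr (by omega) rfl rfl
  · have hi : 4 * ((2 * j + 1) / 2) + (2 * j + 1) % 2 = 4 * j + 1 := by omega
    simp only [boardV, tandemHist, bmHist, hi, tandemMove_four_mul_add_one,
      bmMove_two_mul_add_one]
    exact if_congr (by omega) rfl rfl

theorem boardW_tandemHist (V V' W W' : ℕ → Set E) (k : ℕ) :
    boardW (tandemHist V V' W W' (4 * k + 3)) = bmHist W W' (2 * k + 1) := by
  funext i
  obtain ⟨j, rfl | rfl⟩ := i.even_or_odd'
  · have hi : 4 * (2 * j / 2) + 2 * j % 2 + 2 = 4 * j + 2 := by omega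
    simp only [boardW, tandemHist, bmHist, hi, tandemMove_four_mul_add_two, bmMove_two_mul]
    exact if_congr (by omega) rfl rfl
  · have hi : 4 * ((2 * j + 1) / 2) + (2 * j + 1) % 2 + 2 = 4 * j + 3 := by omega
    simp only [boardW, tandemHist, bmHist, hi, tandemMove_four_mul_add_three,
      bmMove_two_mul_add_one]
    exact if_congr (by omega) rfl rfl

variable [TopologicalSpace E]

theorem TandemLegalHist.boardV {n m : ℕ} {h : ℕ → Set E} (hh : TandemLegalHist n h)
    (hm : ∀ i < m, 4 * (i / 2) + i % 2 < n) : BMLegalHist m (boardV h) :=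
  ⟨fun i hi => hh.1 _ (hm i hi), fun i j hij hj =>
    hh.2.1 _ _ (by omega) (hm j hj) (by omega) (by omega)⟩

theorem TandemLegalHist.boardW {n m : ℕ} {h : ℕ → Set E} (hh : TandemLegalHist n h)
    (hm : ∀ i < m, 4 * (i / 2) + i % 2 + 2 < n) : BMLegalHist m (boardW h) :=
  ⟨fun i hi => hh.1 _ (hm i hi), fun i j hij hj =>
    hh.2.2 _ _ (by omega) (hm j hj) (by omega) (by omega)⟩

theorem IsBMAlphaStrat.tandemOfBM {σ : ℕ → (ℕ → Set E) → Set E} (hσ : IsBMAlphaStrat σ) :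
    IsTandemAlphaStrat (tandemOfBM σ) := by
  intro n h hh hn
  unfold _root_.tandemOfBM
  split_ifs with h4
  · have key := hσ (2 * (n / 4) + 1) (boardV h) (hh.boardV fun i hi => by omega) (by omega)
    have hi : 4 * ((2 * (n / 4) + 1 - 1) / 2) + (2 * (n / 4) + 1 - 1) % 2 = n - 1 := by omega
    simpa only [boardV, hi] using key
  · have key := hσ (2 * (n / 4) + 1) (boardW h) (hh.boardW fun i hi => by omega) (by omega)
    have hi : 4 * ((2 * (n / 4) + 1 - 1) / 2) + (2 * (n / 4) + 1 - 1) % 2 + 2 = n - 1 := by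
      omega
    simpa only [boardW, hi] using key

/-- All histories of a Banach–Mazur play in which α follows a strategy are legal. -/
theorem IsBMAlphaStrat.bmLegalHist {σ : ℕ → (ℕ → Set E) → Set E} (hσ : IsBMAlphaStrat σ)
    {V U : ℕ → Set E} (hfol : BMFollowsAlpha σ V U) (h0 : IsOpen (V 0) ∧ (V 0).Nonempty)
    (hV : ∀ k, IsOpen (V (k + 1)) ∧ (V (k + 1)).Nonempty ∧ V (k + 1) ⊆ U k) (n : ℕ) :
    BMLegalHist n (bmMove V U) := by
  refine bmLegalHist_of_step (fun m hm => ?_) n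
  obtain ⟨k, rfl | rfl⟩ := m.even_or_odd'
  · rw [bmMove_two_mul]
    cases k with
    | zero => exact ⟨h0.1, h0.2, fun h => by omega⟩
    | succ k =>
      have hk : 2 * (k + 1) - 1 = 2 * k + 1 := by omega
      rw [hk, bmMove_two_mul_add_one]
      exact ⟨(hV k).1, (hV k).2.1, fun _ => (hV k).2.2⟩
  · have key := hσ (2 * k + 1) _ hm.truncate (by omega)
    rw [truncate_apply_of_lt (by omega)] at key
    rw [bmMove_two_mul_add_one, hfol k]
    exact ⟨key.1, key.2.1, fun _ => key.2.2⟩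

theorem BMAlphaWinning.iInter_nonempty {σ : ℕ → (ℕ → Set E) → Set E} (hσ : BMAlphaWinning σ)
    {V U : ℕ → Set E} (hfol : BMFollowsAlpha σ V U) (hV : ∀ k, IsOpen (V k) ∧ (V k).Nonempty)
    (hVU : ∀ k, V (k + 1) ⊆ U k) : (⋂ k, V k).Nonempty := by
  have hV' : ∀ k, IsOpen (V (k + 1)) ∧ (V (k + 1)).Nonempty ∧ V (k + 1) ⊆ U k :=
    fun k => ⟨(hV _).1, (hV _).2, hVU k⟩
  refine (hσ.2 V U hfol (hV 0) hV').mono (Set.iInter_mono fun k => ?_)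
  have key := (hσ.1.bmLegalHist hfol (hV 0) hV' (2 * k + 2)).2 (2 * k) (2 * k + 1)
    (by omega) (by omega)
  rwa [bmMove_two_mul, bmMove_two_mul_add_one] at key

theorem BMAlphaWinning.tandemOfBM {σ : ℕ → (ℕ → Set E) → Set E} (hσ : BMAlphaWinning σ) :
    TandemAlphaWinning (tandemOfBM σ) := by
  refine ⟨hσ.1.tandemOfBM, fun V V' W W' hfol hopen hsub => ⟨?_, ?_⟩⟩
  · refine hσ.iInter_nonempty (U := V') (fun k => ?_)
      (fun k => ⟨(hopen k).1, (hopen k).2.1⟩) fun k => (hsub k).1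
    have hk : (4 * k + 1) / 4 = k := by omega
    rw [(hfol k).1, _root_.tandemOfBM, if_pos (by omega), boardV_tandemHist, hk]
  · refine hσ.iInter_nonempty (U := W') (fun k => ?_)
      (fun k => (hopen k).2.2) fun k => (hsub k).2
    have hk : (4 * k + 3) / 4 = k := by omega
    rw [(hfol k).2, _root_.tandemOfBM, if_neg (by omega), boardW_tandemHist, hk]

end OfBM

section OfTandem

variable {E : Type*}

/-- The tandem play simulated from a Banach–Mazur play `h`: the `V`-board is a copy of `h`,
while on the `W`-board β' starts with `h 0` and then repeats the last move of α', who
follows `τ`. -/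
def simulate (τ : ℕ → (ℕ → Set E) → Set E) (h : ℕ → Set E) (n : ℕ) : Set E :=
  if n % 4 = 0 then h (n / 2)
  else if n % 4 = 1 then h (n / 2 + 1)
  else if n % 4 = 2 then (if n < 4 then h 0 else simulate τ h (n - 3))
  else τ n (fun i => if i < n then simulate τ h i else ∅)
termination_by n
decreasing_by all_goals omega

variable {τ : ℕ → (ℕ → Set E) → Set E} {h : ℕ → Set E}

theorem simulate_four_mul (k : ℕ) : simulate τ h (4 * k) = h (2 * k) := by
  rw [simulate, if_pos (by omega)]
  congr 1
  omega

theorem simulate_four_mul_add_one (k : ℕ) : simulate τ h (4 * k + 1) = h (2 * k + 1) := by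
  rw [simulate, if_neg (by omega), if_pos (by omega)]
  congr 1
  omega

theorem simulate_two : simulate τ h 2 = h 0 := by
  rw [simulate]
  simp

theorem simulate_four_mul_add_six (k : ℕ) :
    simulate τ h (4 * k + 6) = simulate τ h (4 * k + 3) := by
  rw [simulate, if_neg (by omega), if_neg (by omega), if_pos (by omega), if_neg (by omega)]
  congr 1

theorem simulate_four_mul_add_three (k : ℕ) :
    simulate τ h (4 * k + 3) = τ (4 * k + 3) (truncate (simulate τ h) (4 * k + 3)) := by
  rw [simulate, if_neg (by omega), if_neg (by omega), if_neg (by omega)]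
  rfl

theorem simulate_congr {g : ℕ → Set E} {N : ℕ} (hg : ∀ i < N, h i = g i) (n : ℕ)
    (hn : n < 2 * N - 1) : simulate τ h n = simulate τ g n := by
  induction n using Nat.strong_induction_on with
  | _ n ih =>
    obtain ⟨k, hk⟩ : ∃ k, n = 4 * k ∨ n = 4 * k + 1 ∨ n = 4 * k + 2 ∨ n = 4 * k + 3 :=
      ⟨n / 4, by omega⟩
    rcases hk with rfl | rfl | rfl | rfl
    · rw [simulate_four_mul, simulate_four_mul, hg _ (by omega)]
    · rw [simulate_four_mul_add_one, simulate_four_mul_add_one, hg _ (by omega)]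
    · cases k with
      | zero => rw [simulate_two, simulate_two, hg _ (by omega)]
      | succ k =>
        have hk : 4 * (k + 1) + 2 = 4 * k + 6 := by omega
        rw [hk, simulate_four_mul_add_six, simulate_four_mul_add_six,
          ih _ (by omega) (by omega)]
    · rw [simulate_four_mul_add_three, simulate_four_mul_add_three,
        truncate_congr fun i hi => ih i hi (by omega)]

theorem tandemMove_simulate (V U : ℕ → Set E) :
    tandemMove V U (fun k => simulate τ (bmMove V U) (4 * k + 2))
      (fun k => simulate τ (bmMove V U) (4 * k + 3)) = simulate τ (bmMove V U) := by
  funext n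
  obtain ⟨k, hk⟩ : ∃ k, n = 4 * k ∨ n = 4 * k + 1 ∨ n = 4 * k + 2 ∨ n = 4 * k + 3 :=
    ⟨n / 4, by omega⟩
  rcases hk with rfl | rfl | rfl | rfl
  · rw [tandemMove_four_mul, simulate_four_mul, bmMove_two_mul]
  · rw [tandemMove_four_mul_add_one, simulate_four_mul_add_one, bmMove_two_mul_add_one]
  · rw [tandemMove_four_mul_add_two]
  · rw [tandemMove_four_mul_add_three]

variable [TopologicalSpace E]

theorem IsTandemAlphaStrat.tandemLegalHist_simulate (hτ : IsTandemAlphaStrat τ) {N : ℕ}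
    (hh : BMLegalHist N h) : TandemLegalHist (2 * N - 1) (simulate τ h) := by
  refine tandemLegalHist_of_step fun m hm hleg => ?_
  obtain ⟨k, hk⟩ : ∃ k, m = 4 * k ∨ m = 4 * k + 1 ∨ m = 4 * k + 2 ∨ m = 4 * k + 3 :=
    ⟨m / 4, by omega⟩
  rcases hk with rfl | rfl | rfl | rfl
  · rw [simulate_four_mul]
    refine ⟨(hh.1 _ (by omega)).1, (hh.1 _ (by omega)).2, fun _ => by omega, fun _ h4 => ?_⟩
    obtain ⟨j, rfl⟩ : ∃ j, k = j + 1 := ⟨k - 1, by omega⟩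
    have hj : 4 * (j + 1) - 3 = 4 * j + 1 := by omega
    rw [hj, simulate_four_mul_add_one]
    exact hh.2 _ _ (by omega) (by omega)
  · rw [simulate_four_mul_add_one, Nat.add_sub_cancel, simulate_four_mul]
    exact ⟨(hh.1 _ (by omega)).1, (hh.1 _ (by omega)).2,
      fun _ => hh.2 _ _ (by omega) (by omega), fun _ => by omega⟩
  · cases k with
    | zero =>
      rw [simulate_two]
      exact ⟨(hh.1 _ (by omega)).1, (hh.1 _ (by omega)).2, fun _ => by omega,
        fun _ => by omega⟩
    | succ k =>
      have hk : 4 * (k + 1) + 2 = 4 * k + 6 := by omega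
      have hk' : 4 * k + 6 - 3 = 4 * k + 3 := by omega
      rw [hk, simulate_four_mul_add_six, hk']
      exact ⟨(hleg.1 _ (by omega)).1, (hleg.1 _ (by omega)).2, fun _ => by omega,
        fun _ _ => subset_rfl⟩
  · have key := hτ (4 * k + 3) _ hleg.truncate (by omega)
    rw [truncate_apply_of_lt (by omega), ← simulate_four_mul_add_three (τ := τ) (h := h)] at key
    exact ⟨key.1, key.2.1, fun _ => key.2.2, fun _ => by omega⟩

/-- The Banach–Mazur strategy that answers as `τ` does on the `V`-board of the simulated
tandem play. -/
def bmOfTandem (τ : ℕ → (ℕ → Set E) → Set E) (n : ℕ) (h : ℕ → Set E) : Set E :=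
  τ (2 * n - 1) (truncate (simulate τ h) (2 * n - 1))

theorem IsTandemAlphaStrat.bmOfTandem (hτ : IsTandemAlphaStrat τ) :
    IsBMAlphaStrat (bmOfTandem τ) := by
  intro n h hh hn
  have key := hτ (2 * n - 1) _ (hτ.tandemLegalHist_simulate hh).truncate (by omega)
  have hi : 2 * n - 1 - 1 = 4 * (n / 2) := by omega
  have hi' : 2 * (n / 2) = n - 1 := by omega
  rwa [truncate_apply_of_lt (by omega), hi, simulate_four_mul, hi'] at key

theorem TandemAlphaWinning.bmOfTandem (hτ : TandemAlphaWinning τ) :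
    BMAlphaWinning (bmOfTandem τ) := by
  refine ⟨hτ.1.bmOfTandem, fun V U hfol h0 hV => ?_⟩
  have hleg : ∀ n, TandemLegalHist (2 * n - 1) (simulate τ (bmMove V U)) := fun n =>
    hτ.1.tandemLegalHist_simulate (hτ.1.bmOfTandem.bmLegalHist hfol h0 hV n)
  have hhist : ∀ n, tandemHist V U (fun k => simulate τ (bmMove V U) (4 * k + 2))
      (fun k => simulate τ (bmMove V U) (4 * k + 3)) n =
        truncate (simulate τ (bmMove V U)) n :=
    fun n => congrArg (truncate · n) (tandemMove_simulate V U)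
  have hwin := hτ.2 V U (fun k => simulate τ (bmMove V U) (4 * k + 2))
    (fun k => simulate τ (bmMove V U) (4 * k + 3)) (fun k => ?_) (fun k => ?_)
    (fun k => ⟨(hV k).2.2, (simulate_four_mul_add_six k).subset⟩)
  · refine hwin.1.mono (Set.subset_iInter fun k => ?_)
    exact (Set.iInter_subset V (k + 1)).trans (hV k).2.2
  · rw [hhist, hhist]
    refine ⟨?_, simulate_four_mul_add_three k⟩
    have hk : 2 * (2 * k + 1) - 1 = 4 * k + 1 := by omega
    rw [hfol k, _root_.bmOfTandem, hk]
    refine congrArg (τ (4 * k + 1)) (truncate_congr fun i hi => ?_)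
    exact simulate_congr (N := 2 * k + 1) (fun j hj => truncate_apply_of_lt hj) i (by omega)
  · have hW := (hleg (2 * k + 2)).1 (4 * k + 2) (by omega)
    cases k with
    | zero => exact ⟨h0.1, h0.2, hW⟩
    | succ k => exact ⟨(hV k).1, (hV k).2.1, hW⟩

end OfTandem

/-- Player α has a winning strategy in the Banach–Mazur game on `E` if and only if
player α' has a winning strategy in the tandem Banach–Mazur game on `E`. -/
theorem bm_alpha_winning_iff_tandem_alpha_winning (E : Type u) [TopologicalSpace E] :
    (∃ σ : ℕ → (ℕ → Set E) → Set E, BMAlphaWinning σ) ↔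
      ∃ σ : ℕ → (ℕ → Set E) → Set E, TandemAlphaWinning σ := by
  exact ⟨fun ⟨σ, hσ⟩ => ⟨tandemOfBM σ, hσ.tandemOfBM⟩,
    fun ⟨τ, hτ⟩ => ⟨bmOfTandem τ, hτ.bmOfTandem⟩⟩
end

section
/- If a topological space E is τ-Baire, then the product space E × E is a Baire space. -/
universe u v w

/-- A space is *τ-Baire* if for every strategy of player β' in the tandem
Banach–Mazur game there is a strategy of player α' which beats it, i.e. in their
play both `⋂ k, V k` and `⋂ k, W k` are nonempty. -/
def TauBaire (E : Type*) [TopologicalSpace E] : Prop :=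
  ∀ σβ : ℕ → (ℕ → Set E) → Set E, IsTandemBetaStrat σβ →
    ∃ σα : ℕ → (ℕ → Set E) → Set E, IsTandemAlphaStrat σα ∧
      ∀ V V' W W' : ℕ → Set E,
        TandemFollowsBeta σβ V V' W W' → TandemFollowsAlpha σα V V' W W' →
        (⋂ k, V k).Nonempty ∧ (⋂ k, W k).Nonempty

section TandemPlay

variable {E : Type*}

/-- The sequence of moves in which every move is given by `τ` applied to the past moves. -/
def playOf (τ : ℕ → (ℕ → Set E) → Set E) (n : ℕ) : Set E :=
  τ n (fun i => if i < n then playOf τ i else ∅)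

theorem tandemHist_split (m : ℕ → Set E) (n : ℕ) :
    tandemHist (fun k => m (4 * k)) (fun k => m (4 * k + 1)) (fun k => m (4 * k + 2))
      (fun k => m (4 * k + 3)) n = fun i => if i < n then m i else ∅ := by
  funext i
  have h : tandemMove (fun k => m (4 * k)) (fun k => m (4 * k + 1)) (fun k => m (4 * k + 2))
      (fun k => m (4 * k + 3)) i = m i := by
    unfold tandemMove
    split_ifs <;> exact congrArg m (by omega)
  simp only [tandemHist, h]

variable [TopologicalSpace E]

theorem TandemLegalHist.congr_s2 {n : ℕ} {h h' : ℕ → Set E} (H : TandemLegalHist n h)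
    (heq : ∀ i < n, h' i = h i) : TandemLegalHist n h' := by
  refine ⟨fun i hi => heq i hi ▸ H.1 i hi, fun i j hij hj hi4 hj4 => ?_,
    fun i j hij hj hi4 hj4 => ?_⟩
  · rw [heq i (hij.trans hj), heq j hj]
    exact H.2.1 i j hij hj hi4 hj4
  · rw [heq i (hij.trans hj), heq j hj]
    exact H.2.2 i j hij hj hi4 hj4

/-- A legal history remains legal after a legal move. -/
theorem TandemLegalHist.succ {n : ℕ} {h : ℕ → Set E} (H : TandemLegalHist n h)
    (hopen : IsOpen (h n)) (hne : (h n).Nonempty)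
    (heven : n % 2 = 0 → 4 ≤ n → h n ⊆ h (n - 3))
    (hodd : n % 2 = 1 → h n ⊆ h (n - 1)) : TandemLegalHist (n + 1) h := by
  refine ⟨fun i hi => ?_, fun i j hij hj hi4 hj4 => ?_, fun i j hij hj hi4 hj4 => ?_⟩
  · obtain hi | rfl := Nat.lt_succ_iff_lt_or_eq.1 hi
    exacts [H.1 i hi, ⟨hopen, hne⟩]
  all_goals
    obtain hj | rfl := Nat.lt_succ_iff_lt_or_eq.1 hj
    · first
      | exact H.2.1 i j hij hj hi4 hj4
      | exact H.2.2 i j hij hj hi4 hj4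
    obtain he | ho := Nat.mod_two_eq_zero_or_one j
    · refine (heven he (by omega)).trans ?_
      obtain rfl | hlt : i = j - 3 ∨ i < j - 3 := by omega
      · rfl
      · first
        | exact H.2.1 i (j - 3) hlt (by omega) hi4 (by omega)
        | exact H.2.2 i (j - 3) hlt (by omega) hi4 (by omega)
    · refine (hodd ho).trans ?_
      obtain rfl | hlt : i = j - 1 ∨ i < j - 1 := by omega
      · rfl
      · first
        | exact H.2.1 i (j - 1) hlt (by omega) hi4 (by omega)
        | exact H.2.2 i (j - 1) hlt (by omega) hi4 (by omega)

/-- Any two strategies can be played against each other, and all positions reached are legal. -/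
theorem exists_tandem_play {σβ σα : ℕ → (ℕ → Set E) → Set E} (hβ : IsTandemBetaStrat σβ)
    (hα : IsTandemAlphaStrat σα) : ∃ m : ℕ → Set E,
      (∀ n, n % 2 = 0 → m n = σβ n (fun i => if i < n then m i else ∅)) ∧
      (∀ n, n % 2 = 1 → m n = σα n (fun i => if i < n then m i else ∅)) ∧
      ∀ n, TandemLegalHist n m := by
  let m := playOf (fun n h => if n % 2 = 0 then σβ n h else σα n h)
  have hmβ : ∀ n, n % 2 = 0 → m n = σβ n (fun i => if i < n then m i else ∅) := by
    intro n hn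
    simp only [m]
    rw [playOf, if_pos hn]
  have hmα : ∀ n, n % 2 = 1 → m n = σα n (fun i => if i < n then m i else ∅) := by
    intro n hn
    simp only [m]
    rw [playOf, if_neg (by omega)]
  refine ⟨m, hmβ, hmα, fun n => ?_⟩
  induction n with
  | zero => simp [TandemLegalHist]
  | succ n ih =>
    have hl : TandemLegalHist n (fun i => if i < n then m i else ∅) :=
      ih.congr_s2 fun i hi => if_pos hi
    obtain hn | hn := Nat.mod_two_eq_zero_or_one n
    · obtain ⟨ho, hne, hsub⟩ := hβ n _ hl hn
      rw [← hmβ n hn] at ho hne hsub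
      refine ih.succ ho hne (fun _ h4 => ?_) (by omega)
      simpa [show n - 3 < n by omega] using hsub h4
    · obtain ⟨ho, hne, hsub⟩ := hα n _ hl hn
      rw [← hmα n hn] at ho hne hsub
      refine ih.succ ho hne (by omega) (fun _ => ?_)
      simpa [show n - 1 < n by omega] using hsub

end TandemPlay

/-- A dense open subset of a product contains an open box inside any given open box. -/
theorem Dense.exists_open_box_subset {X Y : Type*} [TopologicalSpace X] [TopologicalSpace Y]
    {D : Set (X × Y)} (hD : Dense D) (hDo : IsOpen D) {P : Set X} {Q : Set Y}
    (hP : IsOpen P) (hPn : P.Nonempty) (hQ : IsOpen Q) (hQn : Q.Nonempty) :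
    ∃ R : Set X × Set Y, IsOpen R.1 ∧ R.1.Nonempty ∧ R.1 ⊆ P ∧
      IsOpen R.2 ∧ R.2.Nonempty ∧ R.2 ⊆ Q ∧ R.1 ×ˢ R.2 ⊆ D := by
  obtain ⟨⟨x, y⟩, ⟨hxP, hyQ⟩, hxy⟩ := hD.inter_open_nonempty _ (hP.prod hQ) (hPn.prod hQn)
  obtain ⟨A, B, hA, hB, hxA, hyB, hAB⟩ := isOpen_prod_iff.1 hDo x y hxy
  exact ⟨(A ∩ P, B ∩ Q), hA.inter hP, ⟨x, hxA, hxP⟩, Set.inter_subset_right, hB.inter hQ,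
    ⟨y, hyB, hyQ⟩, Set.inter_subset_right,
    (Set.prod_mono Set.inter_subset_left Set.inter_subset_left).trans hAB⟩

/-- If `E` is τ-Baire, then `E × E` is a Baire space. -/
theorem baireSpace_prod_self_of_tauBaire (E : Type u) [TopologicalSpace E]
    (hE : TauBaire E) : BaireSpace (E × E) := by
  refine ⟨fun D hDo hD => dense_iff_inter_open.2 fun U hU ⟨⟨a, b⟩, hab⟩ => ?_⟩
  obtain ⟨A, B, hA, hB, haA, hbB, hAB⟩ := isOpen_prod_iff.1 hU a b hab
  have hbox : ∀ (k : ℕ) (P Q : Set E), ∃ R : Set E × Set E,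
      IsOpen P ∧ P.Nonempty → IsOpen Q ∧ Q.Nonempty →
        IsOpen R.1 ∧ R.1.Nonempty ∧ R.1 ⊆ P ∧
        IsOpen R.2 ∧ R.2.Nonempty ∧ R.2 ⊆ Q ∧ R.1 ×ˢ R.2 ⊆ D k := by
    intro k P Q
    by_cases h : (IsOpen P ∧ P.Nonempty) ∧ (IsOpen Q ∧ Q.Nonempty)
    · obtain ⟨R, hR⟩ := (hD k).exists_open_box_subset (hDo k) h.1.1 h.1.2 h.2.1 h.2.2
      exact ⟨R, fun _ _ => hR⟩
    · exact ⟨(P, Q), fun hP hQ => absurd ⟨hP, hQ⟩ h⟩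
  choose box hbox using hbox
  -- β' starts with `A` and `B`; in each later round the move on the `V`-board fixes a box inside
  -- the current dense open set, whose second side is then played on the `W`-board.
  let σβ : ℕ → (ℕ → Set E) → Set E := fun n h =>
    if n = 0 then A else if n = 2 then B
    else if n % 4 = 0 then (box (n / 4 - 1) (h (n - 3)) (h (n - 1))).1
    else (box (n / 4 - 1) (h (n - 5)) (h (n - 3))).2
  have hβ : IsTandemBetaStrat σβ := by
    intro n h hl hn
    simp only [σβ]
    split_ifs with h0 h2 h4
    · exact ⟨hA, ⟨a, haA⟩, by omega⟩
    · exact ⟨hB, ⟨b, hbB⟩, by omega⟩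
    · obtain ⟨ho, hne, hsub, -⟩ := hbox (n / 4 - 1) (h (n - 3)) (h (n - 1))
        (hl.1 _ (by omega)) (hl.1 _ (by omega))
      exact ⟨ho, hne, fun _ => hsub⟩
    · obtain ⟨-, -, -, ho, hne, hsub, -⟩ := hbox (n / 4 - 1) (h (n - 5)) (h (n - 3))
        (hl.1 _ (by omega)) (hl.1 _ (by omega))
      exact ⟨ho, hne, fun _ => hsub⟩
  obtain ⟨σα, hα, hwin⟩ := hE σβ hβ
  obtain ⟨m, hmβ, hmα, hl⟩ := exists_tandem_play hβ hα
  obtain ⟨⟨x, hx⟩, y, hy⟩ := hwin (fun k => m (4 * k)) (fun k => m (4 * k + 1))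
    (fun k => m (4 * k + 2)) (fun k => m (4 * k + 3))
    (fun k => by
      simp only [tandemHist_split]
      exact ⟨hmβ _ (by omega), hmβ _ (by omega)⟩)
    (fun k => by
      simp only [tandemHist_split]
      exact ⟨hmα _ (by omega), hmα _ (by omega)⟩)
  rw [Set.mem_iInter] at hx hy
  have hm0 : m 0 = A := by rw [hmβ 0 rfl]; simp [σβ]
  have hm2 : m 2 = B := by rw [hmβ 2 rfl]; simp [σβ]
  refine ⟨(x, y), hAB ⟨hm0 ▸ hx 0, hm2 ▸ hy 0⟩, Set.mem_iInter.2 fun k => ?_⟩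
  have hV : m (4 * (k + 1)) = (box k (m (4 * k + 1)) (m (4 * k + 3))).1 := by
    rw [hmβ _ (by omega)]
    simp only [σβ]
    rw [if_neg (by omega), if_neg (by omega), if_pos (by omega), if_pos (by omega),
      if_pos (by omega), show 4 * (k + 1) / 4 - 1 = k by omega,
      show 4 * (k + 1) - 3 = 4 * k + 1 by omega, show 4 * (k + 1) - 1 = 4 * k + 3 by omega]
  have hW : m (4 * (k + 1) + 2) = (box k (m (4 * k + 1)) (m (4 * k + 3))).2 := by
    rw [hmβ _ (by omega)]
    simp only [σβ]
    rw [if_neg (by omega), if_neg (by omega), if_neg (by omega), if_pos (by omega),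
      if_pos (by omega), show (4 * (k + 1) + 2) / 4 - 1 = k by omega,
      show 4 * (k + 1) + 2 - 5 = 4 * k + 1 by omega,
      show 4 * (k + 1) + 2 - 3 = 4 * k + 3 by omega]
  obtain ⟨-, -, -, -, -, -, hsub⟩ := hbox k (m (4 * k + 1)) (m (4 * k + 3))
    ((hl (4 * k + 4)).1 _ (by omega)) ((hl (4 * k + 4)).1 _ (by omega))
  exact hsub ⟨hV ▸ hx (k + 1), hW ▸ hy (k + 1)⟩
end

section
/- Let E be a B_r-space and let f : E → F be a continuous, injective, nearly open map into a Hausdorff space F whose image f(E) is dense in F. Then f is a homeomorphic embedding, i.e., f is a homeomorphism of E onto the subspace f(E) of F. -/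
universe u v w

/-- A map between topological spaces is *nearly open* if the image of every open set is
contained in the interior of the closure of that image. -/
def NearlyOpen {X Y : Type*} [TopologicalSpace X] [TopologicalSpace Y] (f : X → Y) : Prop :=
  ∀ U : Set X, IsOpen U → f '' U ⊆ interior (closure (f '' U))

/-- A Hausdorff space `E` is a *B_r-space* if every continuous nearly open bijection
from `E` onto an arbitrary Hausdorff space is open. -/
def IsBrSpace.{u', v'} (E : Type u') [TopologicalSpace E] [T2Space E] : Prop :=
  ∀ (F : Type v') [TopologicalSpace F] [T2Space F],
    ∀ f : E → F, Continuous f → NearlyOpen f → Function.Bijective f → IsOpenMap f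

/-- The corestriction of a nearly open map to a set containing its image is nearly open. -/
theorem NearlyOpen.codRestrict {X Y : Type*} [TopologicalSpace X] [TopologicalSpace Y]
    {f : X → Y} (hf : NearlyOpen f) {s : Set Y} (hs : ∀ x, f x ∈ s) :
    NearlyOpen (Set.codRestrict f s hs) := by
  rintro U hU _ ⟨x, hx, rfl⟩
  have himage : (Subtype.val '' (Set.codRestrict f s hs '' U) : Set Y) = f '' U := by
    rw [Set.image_image]
    rfl
  rw [Topology.IsInducing.subtypeVal.closure_eq_preimage_closure_image, himage]
  exact preimage_interior_subset_interior_preimage continuous_subtype_val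
    (hf U hU (Set.mem_image_of_mem f hx))

/-- Let `E` be a B_r-space and `f : E → F` a continuous, injective, nearly open map
into a Hausdorff space `F` with dense image. Then `f` is a homeomorphic embedding:
the corestriction of `f` onto the subspace `f(E) = Set.range f` of `F` is a
homeomorphism. -/
theorem isHomeomorph_rangeRestrict_of_isBrSpace (E : Type u) [TopologicalSpace E] [T2Space E]
    (F : Type v) [TopologicalSpace F] [T2Space F]
    (hBr : IsBrSpace.{u, v} E)
    (f : E → F) (hc : Continuous f) (hi : Function.Injective f) (hno : NearlyOpen f)
    (hd : Dense (Set.range f)) :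
    IsHomeomorph (Set.codRestrict f (Set.range f) (fun x => Set.mem_range_self x)) := by
  have hcont : Continuous (Set.codRestrict f (Set.range f) fun x => Set.mem_range_self x) :=
    hc.codRestrict _
  have hbij : Function.Bijective
      (Set.codRestrict f (Set.range f) fun x => Set.mem_range_self x) :=
    ⟨hi.codRestrict _, fun ⟨_, x, hx⟩ => ⟨x, Subtype.ext hx⟩⟩
  exact ⟨hcont, hBr _ _ hcont (hno.codRestrict _) hbij, hbij⟩
end

section
/- Every H-minimal Hausdorff space is a B_q-space. -/
universe u v w

/-- A topological space is *semi-regular* if the regular-open sets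
(sets `V` with `V = interior (closure V)`) form a base of the topology. -/
def SemiRegular (E : Type*) [TopologicalSpace E] : Prop :=
  ∀ (U : Set E) (x : E), IsOpen U → x ∈ U →
    ∃ V : Set E, V = interior (closure V) ∧ x ∈ V ∧ V ⊆ U

/-- A Hausdorff space is *H-minimal* if there is no strictly coarser Hausdorff topology
on its underlying set.  (In Mathlib's order on `TopologicalSpace`, `t ≤ t'` means that
`t` is finer than `t'`, so topologies coarser than `t` are those `t'` with `t ≤ t'`.) -/
def HMinimal (E : Type*) [t : TopologicalSpace E] : Prop :=
  ∀ t' : TopologicalSpace E, t ≤ t' → @T2Space E t' → t' = t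

/-- A Hausdorff space `E` is a *B_q-space* if for every continuous nearly open
surjection `f` from `E` onto a Hausdorff space `F` and every factorization
`f = g ∘ h` with `h : E → G` a continuous surjection onto a semi-regular Hausdorff
space `G` and `g : G → F` a continuous bijection, the map `g` is a homeomorphism. -/
def IsBqSpace.{u', v', w'} (E : Type u') [TopologicalSpace E] [T2Space E] : Prop :=
  ∀ (F : Type v') [TopologicalSpace F] [T2Space F]
    (G : Type w') [TopologicalSpace G] [T2Space G],
    SemiRegular G →
    ∀ (f : E → F) (h : E → G) (g : G → F),
      Continuous f → NearlyOpen f → Function.Surjective f →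
      Continuous h → Function.Surjective h →
      Continuous g → Function.Bijective g →
      f = g ∘ h → IsHomeomorph g

open Filter Topology

/-- The coarser topology in which the neighborhoods of `p` must also belong to `l`. -/
abbrev coarsenAt {E : Type*} [TopologicalSpace E] (p : E) (l : Filter E) :
    TopologicalSpace E where
  IsOpen U := IsOpen U ∧ (p ∈ U → U ∈ l)
  isOpen_univ := ⟨isOpen_univ, fun _ => univ_mem⟩
  isOpen_inter _ _ hU hV :=
    ⟨hU.1.inter hV.1, fun h => inter_mem (hU.2 h.1) (hV.2 h.2)⟩
  isOpen_sUnion _ hS :=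
    ⟨isOpen_sUnion fun U hU => (hS U hU).1, fun ⟨U, hU, hp⟩ =>
      mem_of_superset ((hS U hU).2 hp) (Set.subset_sUnion_of_mem hU)⟩

/-- In an H-minimal Hausdorff space every proper filter with a base of open sets has a
cluster point. -/
theorem HMinimal.exists_clusterPt {E : Type*} [TopologicalSpace E] [T2Space E]
    (hmin : HMinimal E) (l : Filter E) [l.NeBot] (hl : ∀ s ∈ l, interior s ∈ l) :
    ∃ p, ClusterPt p l := by
  by_contra! hcl
  obtain ⟨p⟩ : Nonempty E := l.nonempty_of_neBot
  have separate : ∀ x, x ≠ p → ∃ U V : Set E, IsOpen[coarsenAt p l] U ∧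
      IsOpen[coarsenAt p l] V ∧ x ∈ U ∧ p ∈ V ∧ Disjoint U V := by
    intro x hx
    obtain ⟨U, V, hU, hV, hxU, hpV, hUV⟩ := t2_separation hx
    have hd : Disjoint (𝓝 x) l := by
      have := hcl x
      rwa [ClusterPt, neBot_iff, not_not, ← disjoint_iff] at this
    obtain ⟨A, hA, B, hB, hAB⟩ := Filter.disjoint_iff.1 hd
    refine ⟨U ∩ interior A, V ∪ interior B,
      ⟨hU.inter isOpen_interior, fun h => (Set.disjoint_left.1 hUV h.1 hpV).elim⟩,
      ⟨hV.union isOpen_interior, fun _ => mem_of_superset (hl B hB) Set.subset_union_right⟩,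
      ⟨hxU, mem_interior_iff_mem_nhds.2 hA⟩, Or.inl hpV, ?_⟩
    exact Set.disjoint_union_right.2 ⟨hUV.mono_left Set.inter_subset_left,
      hAB.mono (Set.inter_subset_right.trans interior_subset) interior_subset⟩
  have ht2 : @T2Space E (coarsenAt p l) := by
    refine @T2Space.mk E (coarsenAt p l) fun x y hxy => ?_
    by_cases hx : x = p
    · subst hx
      obtain ⟨U, V, hU, hV, hyU, hxV, hUV⟩ := separate y hxy.symm
      exact ⟨V, U, hV, hU, hxV, hyU, hUV.symm⟩
    by_cases hy : y = p
    · subst hy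
      exact separate x hx
    obtain ⟨U, V, hU, hV, hxU, hyV, hUV⟩ := t2_separation hxy
    exact ⟨U \ {p}, V \ {p}, ⟨hU.sdiff isClosed_singleton, fun h => (h.2 rfl).elim⟩,
      ⟨hV.sdiff isClosed_singleton, fun h => (h.2 rfl).elim⟩, ⟨hxU, hx⟩, ⟨hyV, hy⟩,
      hUV.mono Set.sdiff_subset Set.sdiff_subset⟩
  have heq := hmin (coarsenAt p l) (fun U hU => hU.1) ht2
  have hlp : l ≤ 𝓝 p := by
    intro s hs
    obtain ⟨U, hUs, hU, hpU⟩ := mem_nhds_iff.1 hs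
    have hU' : IsOpen[coarsenAt p l] U := by rwa [heq]
    exact mem_of_superset (hU'.2 hpU) hUs
  exact hcl p (ClusterPt.of_le_nhds hlp)

/-- The existence of cluster points of open filters passes to continuous images. -/
theorem exists_clusterPt_of_continuous_surjective {E G : Type*} [TopologicalSpace E]
    [TopologicalSpace G]
    (hE : ∀ l : Filter E, l.NeBot → (∀ s ∈ l, interior s ∈ l) → ∃ p, ClusterPt p l)
    {h : E → G} (hc : Continuous h) (hs : Function.Surjective h)
    (l : Filter G) [l.NeBot] (hl : ∀ s ∈ l, interior s ∈ l) : ∃ p, ClusterPt p l := by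
  obtain ⟨p, hp⟩ := hE (comap h l) (NeBot.comap_of_surj ‹_› hs) (by
    rintro s ⟨t, ht, hts⟩
    exact ⟨interior t, hl t ht, interior_maximal
      ((Set.preimage_mono interior_subset).trans hts) (isOpen_interior.preimage hc)⟩)
  exact ⟨h p, hp.map hc.continuousAt tendsto_comap⟩

/-- A continuous bijection from a semi-regular space in which open filters have cluster
points to a Hausdorff space is open. -/
theorem SemiRegular.isOpenMap_of_bijective {G F : Type*} [TopologicalSpace G]
    [TopologicalSpace F] [T2Space F] (hG : SemiRegular G)
    (hcl : ∀ l : Filter G, l.NeBot → (∀ s ∈ l, interior s ∈ l) → ∃ p, ClusterPt p l)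
    {g : G → F} (hc : Continuous g) (hg : Function.Bijective g) : IsOpenMap g := by
  intro U hU
  rw [isOpen_iff_mem_nhds]
  rintro _ ⟨x, hxU, rfl⟩
  obtain ⟨V, hV, hxV, hVU⟩ := hG U x hU hxU
  by_cases hbot : (comap g (𝓝 (g x)) ⊓ 𝓟 (closure V)ᶜ).NeBot
  · obtain ⟨q, hq⟩ := hcl _ hbot (by
      intro s hs
      rw [mem_inf_principal] at hs
      obtain ⟨t, ht, hts⟩ := hs
      have hopen : IsOpen (g ⁻¹' interior t ∩ (closure V)ᶜ) :=
        (isOpen_interior.preimage hc).inter isClosed_closure.isOpen_compl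
      refine mem_of_superset (inter_mem_inf (preimage_mem_comap (interior_mem_nhds.2 ht))
        (mem_principal_self _)) (interior_maximal ?_ hopen)
      exact fun y hy => hts (Set.preimage_mono interior_subset hy.1) hy.2)
    have hqx : q = x := by
      have hgq : ClusterPt (g q) (𝓝 (g x)) :=
        (hq.mono inf_le_left).map hc.continuousAt tendsto_comap
      exact hg.1 (eq_of_nhds_neBot hgq)
    subst hqx
    have hmem := mem_closure_iff_clusterPt.2 (hq.mono inf_le_right)
    rw [closure_compl, ← hV] at hmem
    exact (hmem hxV).elim
  · rw [neBot_iff, not_not, ← disjoint_iff, disjoint_principal_right, compl_compl] at hbot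
    obtain ⟨W, hW, hWV⟩ := hbot
    refine mem_of_superset (interior_mem_nhds.2 hW) fun y hy => ?_
    obtain ⟨z, rfl⟩ := hg.2 y
    refine ⟨z, hVU ?_, rfl⟩
    rw [hV]
    exact interior_maximal ((Set.preimage_mono interior_subset).trans hWV)
      (isOpen_interior.preimage hc) hy

/-- Every H-minimal Hausdorff space is a B_q-space. -/
theorem isBqSpace_of_hMinimal (E : Type u) [TopologicalSpace E] [T2Space E]
    (hmin : HMinimal E) : IsBqSpace.{u, v, w} E := by
  intro F _ _ G _ _ hG f h g _ _ _ hh hhs hg hgb _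
  have hcl : ∀ l : Filter G, l.NeBot → (∀ s ∈ l, interior s ∈ l) → ∃ p, ClusterPt p l :=
    fun l _ hl => exists_clusterPt_of_continuous_surjective
      (fun l _ hl => hmin.exists_clusterPt l hl) hh hhs l hl
  exact ⟨hg, hG.isOpenMap_of_bijective hcl hg hgb, hgb⟩
end

section
/- Let E be a semi-regular Hausdorff space containing a dense subspace D (with the subspace topology) which is a B_q-space. Then E is a B_q-space. -/
universe u v w

open Set Topology

/-- An open set whose trace on a dense set lies in `closure V` lies in `interior (closure V)`. -/
theorem Dense.subset_interior_closure_of_inter_subset {X : Type*} [TopologicalSpace X]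
    {S O V : Set X} (hS : Dense S) (hO : IsOpen O) (h : O ∩ S ⊆ closure V) :
    O ⊆ interior (closure V) :=
  interior_maximal ((hS.open_subset_closure_inter hO).trans
    (closure_minimal h isClosed_closure)) hO

/-- A dense subspace of a semi-regular space is semi-regular. -/
theorem SemiRegular.of_dense {X : Type*} [TopologicalSpace X] (hX : SemiRegular X)
    {S : Set X} (hS : Dense S) : SemiRegular S := by
  rintro _ x ⟨U, hU, rfl⟩ hx
  obtain ⟨V, hV, hxV, hVU⟩ := hX U x hU hx
  have hVo : IsOpen V := hV ▸ isOpen_interior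
  refine ⟨Subtype.val ⁻¹' V, ?_, hxV, preimage_mono hVU⟩
  refine (interior_maximal subset_closure (hVo.preimage continuous_subtype_val)).antisymm ?_
  intro d hd
  obtain ⟨O, hO, hOeq⟩ := isOpen_induced_iff.mp
    (isOpen_interior (s := closure ((Subtype.val : S → X) ⁻¹' V)))
  have hOV : O ⊆ interior (closure V) := by
    refine hS.subset_interior_closure_of_inter_subset hO ?_
    rintro y ⟨hyO, hyS⟩
    have hy : (⟨y, hyS⟩ : S) ∈ interior (closure ((Subtype.val : S → X) ⁻¹' V)) := by
      rw [← hOeq]; exact hyO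
    exact continuous_subtype_val.closure_preimage_subset V (interior_subset hy)
  rw [← hOeq] at hd
  rw [mem_preimage, hV]
  exact hOV hd

/-- A continuous nearly open map restricts to a nearly open map from a dense subspace onto
its image. -/
theorem NearlyOpen.restrict_of_dense {X Y : Type*} [TopologicalSpace X] [TopologicalSpace Y]
    {f : X → Y} (hf : NearlyOpen f) (hc : Continuous f) {D : Set X} (hD : Dense D) :
    NearlyOpen ((mapsTo_image f D).restrict f D (f '' D)) := by
  rintro _ ⟨U, hU, rfl⟩ _ ⟨d, hd, rfl⟩
  have hsub : f '' U ⊆ closure (f '' (U ∩ D)) :=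
    (image_mono (hD.open_subset_closure_inter hU)).trans (image_closure_subset_closure_image hc)
  have hmem : f d ∈ interior (closure (f '' (U ∩ D))) :=
    interior_mono (closure_minimal hsub isClosed_closure) (hf U hU (mem_image_of_mem f hd))
  refine mem_interior.mpr ⟨Subtype.val ⁻¹' interior (closure (f '' (U ∩ D))), ?_,
    isOpen_interior.preimage continuous_subtype_val, hmem⟩
  intro y hy
  rw [closure_subtype]
  refine closure_mono ?_ (interior_subset hy)
  rintro _ ⟨x, ⟨hxU, hxD⟩, rfl⟩
  exact ⟨_, ⟨⟨x, hxD⟩, hxU, rfl⟩, rfl⟩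

/-- A continuous nearly open bijection from a semi-regular space whose restriction to a dense
set is inducing is a homeomorphism. -/
theorem NearlyOpen.isHomeomorph_of_isInducing_restrict {X Y : Type*} [TopologicalSpace X]
    [TopologicalSpace Y] (hX : SemiRegular X) {g : X → Y} (hg : NearlyOpen g)
    (hc : Continuous g) (hb : Function.Bijective g) {S : Set X} (hS : Dense S)
    (hi : IsInducing (S.domRestrict g)) : IsHomeomorph g := by
  refine ⟨hc, fun U hU => isOpen_iff_mem_nhds.mpr ?_, hb⟩
  rintro _ ⟨x, hx, rfl⟩
  obtain ⟨V, hV, hxV, hVU⟩ := hX U x hU hx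
  have hVo : IsOpen V := hV ▸ isOpen_interior
  have hsub : closure (g '' V) ⊆ closure (g '' (V ∩ S)) :=
    closure_minimal ((image_mono (hS.open_subset_closure_inter hVo)).trans
      (image_closure_subset_closure_image hc)) isClosed_closure
  have himg : g '' (V ∩ S) ⊆ S.domRestrict g '' (Subtype.val ⁻¹' V) := by
    rintro _ ⟨z, ⟨hzV, hzS⟩, rfl⟩
    exact ⟨⟨z, hzS⟩, hzV, rfl⟩
  have hpre : g ⁻¹' interior (closure (g '' V)) ⊆ V := by
    refine (hS.subset_interior_closure_of_inter_subset (isOpen_interior.preimage hc) ?_).trans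
      hV.symm.subset
    rintro z ⟨hz, hzS⟩
    have hz' : (⟨z, hzS⟩ : S) ∈ closure ((Subtype.val : S → X) ⁻¹' V) := by
      rw [hi.closure_eq_preimage_closure_image]
      exact closure_mono himg (hsub (interior_subset hz))
    exact continuous_subtype_val.closure_preimage_subset V hz'
  refine Filter.mem_of_superset
    (isOpen_interior.mem_nhds (hg V hVo (mem_image_of_mem g hxV))) ?_
  intro y hy
  obtain ⟨z, rfl⟩ := hb.surjective y
  exact mem_image_of_mem g (hVU (hpre hy))

/-- If `g ∘ h` is nearly open and `h` is a continuous surjection, then `g` is nearly open. -/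
theorem NearlyOpen.of_comp {X Y Z : Type*} [TopologicalSpace X] [TopologicalSpace Y]
    [TopologicalSpace Z] {g : Y → Z} {h : X → Y} (hgh : NearlyOpen (g ∘ h))
    (hc : Continuous h) (hs : Function.Surjective h) : NearlyOpen g := by
  intro V hV
  have := hgh (h ⁻¹' V) (hV.preimage hc)
  rwa [image_comp, image_preimage_eq V hs] at this

/-- Let `E` be a semi-regular Hausdorff space containing a dense subspace `D` which is
a B_q-space. Then `E` is a B_q-space. -/
theorem isBqSpace_of_dense_isBqSpace (E : Type u) [TopologicalSpace E] [T2Space E]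
    (hsr : SemiRegular E) (D : Set E) (hD : Dense D)
    (hBq : IsBqSpace.{u, v, w} ↥D) : IsBqSpace.{u, v, w} E := by
  intro F _ _ G _ _ hG f h g hfc hfn hfs hhc hhs hgc hgb hfgh
  subst hfgh
  have hS : Dense (h '' D) := hhs.denseRange.dense_image hhc hD
  have hmaps : MapsTo g (h '' D) ((g ∘ h) '' D) := by
    rw [image_comp]
    exact mapsTo_image g _
  have hres : IsHomeomorph (hmaps.restrict g (h '' D) ((g ∘ h) '' D)) := by
    refine hBq _ _ (hG.of_dense hS) _ ((mapsTo_image h D).restrict h D (h '' D)) _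
      (hfc.restrict (mapsTo_image _ D)) (hfn.restrict_of_dense hfc hD)
      (surjective_mapsTo_image_restrict _ D)
      (hhc.restrict _) (surjective_mapsTo_image_restrict h D) (hgc.restrict hmaps)
      ⟨hmaps.restrict_inj.mpr hgb.injective.injOn, ?_⟩ rfl
    rintro ⟨_, d, hd, rfl⟩
    exact ⟨⟨h d, mem_image_of_mem h hd⟩, rfl⟩
  exact (hfn.of_comp hhc hhs).isHomeomorph_of_isInducing_restrict hG hgc hgb hS
    (IsInducing.subtypeVal.comp hres.isInducing)
end

section
/- Let E be a B_q-space and let h : E → G be a continuous nearly open surjection onto a semi-regular Hausdorff space G. Then G is a B_r-space. -/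
universe u v w

/-- The composition of nearly open maps is nearly open when the outer map is continuous. -/
theorem NearlyOpen.comp {X Y Z : Type*} [TopologicalSpace X] [TopologicalSpace Y]
    [TopologicalSpace Z] {g : Y → Z} {h : X → Y} (hg : NearlyOpen g) (hgc : Continuous g)
    (hh : NearlyOpen h) : NearlyOpen (g ∘ h) := by
  intro U hU
  rw [Set.image_comp]
  have hsub : g '' interior (closure (h '' U)) ⊆ closure (g '' (h '' U)) :=
    (Set.image_mono interior_subset).trans (image_closure_subset_closure_image hgc)
  exact (Set.image_mono (hh U hU)).trans
    ((hg _ isOpen_interior).trans (interior_mono (closure_minimal hsub isClosed_closure)))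

/-- Let `E` be a B_q-space and `h : E → G` a continuous nearly open surjection onto a
semi-regular Hausdorff space `G`. Then `G` is a B_r-space. -/
theorem isBrSpace_of_isBqSpace_image (E : Type u) [TopologicalSpace E] [T2Space E]
    (G : Type w) [TopologicalSpace G] [T2Space G]
    (hBq : IsBqSpace.{u, v, w} E) (hG : SemiRegular G)
    (h : E → G) (hc : Continuous h) (hno : NearlyOpen h) (hs : Function.Surjective h) :
    IsBrSpace.{w, v} G := by
  intro F _ _ g hgc hgno hgb
  exact (hBq F G hG (g ∘ h) h g (hgc.comp hc) (hgno.comp hgc hno) (hgb.surjective.comp hs)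
    hc hs hgc hgb rfl).isOpenMap
end

section
/- Let E be a regular Hausdorff space which is m-Baire (player β has no winning strategy in the Michael game on E). Then every Gδ subset G of E, with the subspace topology, is m-Baire. -/
universe u v w

section Michael

variable {E : Type*} [TopologicalSpace E]

/-- The `n`-th move of a play `B₁ ⊇ A₁ ⊇ B₂ ⊇ A₂ ⊇ …` of the Michael game: the moves
of player β (the sets `Bᵢ`) sit at even indices, the moves of player α (the sets `Aᵢ`)
at odd ones. -/
def michaelMove (B A : ℕ → Set E) (n : ℕ) : Set E :=
  if n % 2 = 0 then B (n / 2) else A (n / 2)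

/-- The history of the first `n` moves of a Michael play (as a function that is `∅`
from index `n` onwards, so that a strategy can only use the past moves). -/
def michaelHist (B A : ℕ → Set E) (n : ℕ) : ℕ → Set E :=
  fun i => if i < n then michaelMove B A i else ∅

/-- A legal Michael history of length `n`: the moves are nonempty, decreasing, and
each move of player α (odd index) is relatively open in the preceding move. -/
def MichaelLegalHist (n : ℕ) (h : ℕ → Set E) : Prop :=
  (∀ i < n, (h i).Nonempty) ∧
  (∀ i j : ℕ, i < j → j < n → h j ⊆ h i) ∧
  (∀ i < n, i % 2 = 1 → ∃ U : Set E, IsOpen U ∧ h i = h (i - 1) ∩ U)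

/-- A strategy for player β in the Michael game: to every legal history of even length
it assigns a nonempty subset of the last move (the first move is an arbitrary nonempty
set). -/
def IsMichaelBetaStrat (σ : ℕ → (ℕ → Set E) → Set E) : Prop :=
  ∀ (n : ℕ) (h : ℕ → Set E), MichaelLegalHist n h → n % 2 = 0 →
    (σ n h).Nonempty ∧ (0 < n → σ n h ⊆ h (n - 1))

/-- The play `(B, A)` follows the β-strategy `σ`. -/
def MichaelFollowsBeta (σ : ℕ → (ℕ → Set E) → Set E) (B A : ℕ → Set E) : Prop :=
  ∀ k : ℕ, B k = σ (2 * k) (michaelHist B A (2 * k))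

/-- `σ` is a winning strategy for player β in the Michael game: it is a strategy for β
and in every play in which β follows `σ` and α plays legally (each `A k` nonempty and
relatively open in `B k`) we have `⋂ k, cl (A k) = ∅`. -/
def MichaelBetaWinning (σ : ℕ → (ℕ → Set E) → Set E) : Prop :=
  IsMichaelBetaStrat σ ∧
    ∀ B A : ℕ → Set E, MichaelFollowsBeta σ B A →
      (∀ k : ℕ, (A k).Nonempty ∧ ∃ U : Set E, IsOpen U ∧ A k = B k ∩ U) →
      (⋂ k, closure (A k)) = ∅

end Michael

/-- A space is *m-Baire* if player β has no winning strategy in the Michael game. -/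
def MBaire (E : Type*) [TopologicalSpace E] : Prop :=
  ¬ ∃ σ : ℕ → (ℕ → Set E) → Set E, MichaelBetaWinning σ

open Set

section MichaelAux

variable {X : Type*}

/-- The moves of player β following `σ` against the moves `a` of player α. -/
noncomputable def michaelReply (σ : ℕ → (ℕ → Set X) → Set X) (a : ℕ → Set X) (k : ℕ) : Set X :=
  σ (2 * k) fun i =>
    if _h : i < 2 * k then if i % 2 = 0 then michaelReply σ a (i / 2) else a (i / 2) else ∅
termination_by k
decreasing_by omega

theorem michaelReply_follows (σ : ℕ → (ℕ → Set X) → Set X) (a : ℕ → Set X) :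
    MichaelFollowsBeta σ (michaelReply σ a) a := by
  intro k
  rw [michaelReply]
  congr 1

theorem michaelHist_congr {B A B' A' : ℕ → Set X} {k : ℕ} (hB : ∀ j < k, B j = B' j)
    (hA : ∀ j < k, A j = A' j) : michaelHist B A (2 * k) = michaelHist B' A' (2 * k) := by
  funext i
  unfold michaelHist michaelMove
  by_cases hi : i < 2 * k
  · rw [if_pos hi, if_pos hi, hB (i / 2) (by omega), hA (i / 2) (by omega)]
  · rw [if_neg hi, if_neg hi]

theorem michaelReply_congr (σ : ℕ → (ℕ → Set X) → Set X) {a a' : ℕ → Set X} (k : ℕ)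
    (h : ∀ j < k, a j = a' j) : michaelReply σ a k = michaelReply σ a' k := by
  induction k using Nat.strong_induction_on with
  | _ k ih =>
    rw [michaelReply_follows σ a k, michaelReply_follows σ a' k,
      michaelHist_congr (fun j hj => ih j hj fun i hi => h i (hi.trans hj)) h]

theorem michaelHist_odd {B A : ℕ → Set X} {n j : ℕ} (h : 2 * j + 1 < n) :
    michaelHist B A n (2 * j + 1) = A j := by
  have h₁ : (2 * j + 1) % 2 ≠ 0 := by omega
  have h₂ : (2 * j + 1) / 2 = j := by omega
  simp only [michaelHist, michaelMove, if_pos h, if_neg h₁, h₂]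

theorem michaelHist_even {B A : ℕ → Set X} {n j : ℕ} (h : 2 * j < n) :
    michaelHist B A n (2 * j) = B j := by
  have h₁ : (2 * j) % 2 = 0 := by omega
  have h₂ : (2 * j) / 2 = j := by omega
  simp only [michaelHist, michaelMove, if_pos h, if_pos h₁, h₂]

theorem michaelLegalHist_of_forall [TopologicalSpace X] {B A : ℕ → Set X} {m : ℕ}
    (hB : ∀ k < m, (B k).Nonempty) (hA : ∀ k < m, (A k).Nonempty)
    (hU : ∀ k < m, ∃ U : Set X, IsOpen U ∧ A k = B k ∩ U)
    (hBA : ∀ k, k + 1 < m → B (k + 1) ⊆ A k) :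
    MichaelLegalHist (2 * m) (michaelHist B A (2 * m)) := by
  refine ⟨fun i hi => ?_, fun i j hij => ?_, fun i hi hi2 => ?_⟩
  · obtain ⟨k, rfl | rfl⟩ := Nat.even_or_odd' i
    · rw [michaelHist_even hi]; exact hB k (by omega)
    · rw [michaelHist_odd hi]; exact hA k (by omega)
  · have step : ∀ i, i + 1 < 2 * m →
        michaelHist B A (2 * m) (i + 1) ⊆ michaelHist B A (2 * m) i := by
      intro i hi
      obtain ⟨k, rfl | rfl⟩ := Nat.even_or_odd' i
      · rw [michaelHist_odd hi, michaelHist_even (by omega)]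
        obtain ⟨U, -, h⟩ := hU k (by omega)
        exact h ▸ inter_subset_left
      · rw [show 2 * k + 1 + 1 = 2 * (k + 1) by ring, michaelHist_even (by omega),
          michaelHist_odd (by omega)]
        exact hBA k (by omega)
    induction j, hij using Nat.le_induction with
    | base => exact step i
    | succ j _ ih => exact fun hj => (step j hj).trans (ih (by omega))
  · obtain ⟨k, rfl | rfl⟩ := Nat.even_or_odd' i
    · omega
    · rw [michaelHist_odd hi, Nat.add_sub_cancel, michaelHist_even (by omega)]
      exact hU k (by omega)

end MichaelAux

section Transfer

variable {E : Type*} {G : Set E}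

/-- The trace on `G` of the moves of player α in a history in `E`. -/
def alphaTrace (G : Set E) (h : ℕ → Set E) (j : ℕ) : Set G :=
  Subtype.val ⁻¹' h (2 * j + 1)

open Classical in
/-- The β-strategy on `E` which answers as `σ` does on `G`, intersecting the `k`-th answer `B`
with `V k B`. -/
noncomputable def transferStrat [TopologicalSpace E] (σ : ℕ → (ℕ → Set G) → Set G)
    (V : ℕ → Set G → Set E) (n : ℕ) (h : ℕ → Set E) : Set E :=
  if MichaelLegalHist n (michaelHist (michaelReply σ (alphaTrace G h)) (alphaTrace G h) n) then
    Subtype.val '' michaelReply σ (alphaTrace G h) (n / 2) ∩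
      V (n / 2) (michaelReply σ (alphaTrace G h) (n / 2))
  else h (n - 1)

theorem isMichaelBetaStrat_transferStrat [TopologicalSpace E] {σ : ℕ → (ℕ → Set G) → Set G}
    (hσ : IsMichaelBetaStrat σ) {V : ℕ → Set G → Set E}
    (hV : ∀ k B, B.Nonempty → (Subtype.val '' B ∩ V k B).Nonempty) :
    IsMichaelBetaStrat (transferStrat σ V) := by
  intro n h hh hn
  obtain ⟨k, rfl⟩ : ∃ k, n = 2 * k := ⟨n / 2, by omega⟩
  unfold transferStrat
  split_ifs with hl
  · have hs := hσ _ _ hl hn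
    rw [← michaelReply_follows σ (alphaTrace G h) k] at hs
    rw [Nat.mul_div_cancel_left k two_pos]
    refine ⟨hV _ _ hs.1, fun hk => ?_⟩
    obtain ⟨j, rfl⟩ : ∃ j, k = j + 1 := ⟨k - 1, by omega⟩
    have h₂ := hs.2 hk
    rw [show 2 * (j + 1) - 1 = 2 * j + 1 by omega] at h₂ ⊢
    rw [michaelHist_odd (by omega)] at h₂
    exact inter_subset_left.trans (image_subset_iff.2 h₂)
  · have hk : 0 < 2 * k := by
      by_contra hk
      refine hl ⟨?_, ?_, ?_⟩ <;> intros <;> omega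
    exact ⟨hh.1 _ (by omega), fun _ => Subset.rfl⟩

theorem transferStrat_michaelHist [TopologicalSpace E] {σ : ℕ → (ℕ → Set G) → Set G}
    {V : ℕ → Set G → Set E} {B A : ℕ → Set E} {a : ℕ → Set G}
    (ha : ∀ j, a j = Subtype.val ⁻¹' A j) {k : ℕ}
    (hl : MichaelLegalHist (2 * k) (michaelHist (michaelReply σ a) a (2 * k))) :
    transferStrat σ V (2 * k) (michaelHist B A (2 * k)) =
      Subtype.val '' michaelReply σ a k ∩ V k (michaelReply σ a k) := by
  have htr : ∀ j < k, alphaTrace G (michaelHist B A (2 * k)) j = a j := by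
    intro j hj
    rw [alphaTrace, michaelHist_odd (by omega), ha]
  have hrep : ∀ j ≤ k, michaelReply σ (alphaTrace G (michaelHist B A (2 * k))) j =
      michaelReply σ a j :=
    fun j hj => michaelReply_congr σ j fun i hi => htr i (hi.trans_le hj)
  unfold transferStrat
  rw [michaelHist_congr (fun j hj => hrep j hj.le) htr, if_pos hl,
    Nat.mul_div_cancel_left k two_pos, hrep k le_rfl]

/-- If `V k B` is open with closure inside `O k`, where `G = ⋂ k, O k`, then transferring a
winning strategy from `G` to `E` yields a winning strategy. -/
theorem michaelBetaWinning_transferStrat [TopologicalSpace E] {σ : ℕ → (ℕ → Set G) → Set G}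
    (hσ : MichaelBetaWinning σ) {O : ℕ → Set E} (hO : G = ⋂ k, O k) {V : ℕ → Set G → Set E}
    (hVo : ∀ k B, B.Nonempty → IsOpen (V k B))
    (hV : ∀ k B, B.Nonempty → (Subtype.val '' B ∩ V k B).Nonempty)
    (hVO : ∀ k B, B.Nonempty → closure (V k B) ⊆ O k) :
    MichaelBetaWinning (transferStrat σ V) := by
  refine ⟨isMichaelBetaStrat_transferStrat hσ.1 hV, fun B A hf hA => ?_⟩
  set a : ℕ → Set G := fun j => Subtype.val ⁻¹' A j with ha
  set b := michaelReply σ a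
  have key : ∀ k, (b k).Nonempty ∧ (a k).Nonempty ∧ (∃ U : Set G, IsOpen U ∧ a k = b k ∩ U) ∧
      (∀ j, k = j + 1 → b k ⊆ a j) ∧ B k = Subtype.val '' b k ∩ V k (b k) := by
    intro k
    induction k using Nat.strong_induction_on with
    | _ k ih =>
      have hl : MichaelLegalHist (2 * k) (michaelHist b a (2 * k)) :=
        michaelLegalHist_of_forall (fun j hj => (ih j hj).1) (fun j hj => (ih j hj).2.1)
          (fun j hj => (ih j hj).2.2.1) fun j hj => (ih (j + 1) hj).2.2.2.1 j rfl
      have hs := hσ.1 _ _ hl (by omega)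
      rw [← michaelReply_follows σ a k] at hs
      have hBk : B k = Subtype.val '' b k ∩ V k (b k) :=
        (hf k).trans (transferStrat_michaelHist (fun _ => rfl) hl)
      obtain ⟨⟨x, hx⟩, U, hU, hAU⟩ := hA k
      refine ⟨hs.1, ?_, ⟨Subtype.val ⁻¹' (V k (b k) ∩ U),
        ((hVo k _ hs.1).inter hU).preimage continuous_subtype_val, ?_⟩, ?_, hBk⟩
      · have hx' := hx
        rw [hAU, hBk] at hx'
        obtain ⟨⟨⟨y, -, rfl⟩, -⟩, -⟩ := hx'
        exact ⟨y, hx⟩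
      · simp only [ha, hAU, hBk, preimage_inter, preimage_image_eq _ Subtype.val_injective,
          inter_assoc]
      · rintro j rfl
        have h₂ := hs.2 (by omega)
        rwa [show 2 * (j + 1) - 1 = 2 * j + 1 by omega, michaelHist_odd (by omega)] at h₂
  have hAB : ∀ k, A k ⊆ B k := fun k => by
    obtain ⟨-, U, -, h⟩ := hA k
    exact h ▸ inter_subset_left
  have hempty := hσ.2 b a (michaelReply_follows σ a) fun k => ⟨(key k).2.1, (key k).2.2.1⟩
  refine eq_empty_of_forall_notMem fun x hx => ?_
  rw [mem_iInter] at hx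
  have hxG : x ∈ G := by
    rw [hO, mem_iInter]
    intro k
    obtain ⟨hbk, -, -, -, hBk⟩ := key k
    exact hVO k _ hbk (closure_mono ((hAB k).trans (hBk ▸ inter_subset_right)) (hx k))
  refine (hempty ▸ notMem_empty (⟨x, hxG⟩ : G)) (mem_iInter.2 fun k => ?_)
  rw [closure_subtype, Subtype.image_preimage_coe, inter_eq_self_of_subset_right]
  · exact hx k
  · refine (hAB k).trans ?_
    rw [(key k).2.2.2.2]
    exact inter_subset_left.trans (Subtype.coe_image_subset G _)

end Transfer

/-- Let `E` be a regular Hausdorff m-Baire space. Then every Gδ subset of `E`, with the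
subspace topology, is m-Baire. -/
theorem mBaire_gdelta_of_mBaire (E : Type u) [TopologicalSpace E]
    [RegularSpace E] [T2Space E]
    (hE : MBaire E) (G : Set E) (hG : IsGδ G) : MBaire ↥G := by
  rintro ⟨σ, hσ⟩
  obtain ⟨O, hOo, hO⟩ := isGδ_iff_eq_iInter_nat.1 hG
  have hex : ∀ (k : ℕ) (B : Set G), ∃ V : Set E, B.Nonempty →
      IsOpen V ∧ (Subtype.val '' B ∩ V).Nonempty ∧ closure V ⊆ O k := by
    intro k B
    by_cases hB : B.Nonempty
    · obtain ⟨x, hx⟩ := hB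
      have hxO : (x : E) ∈ O k := mem_iInter.1 (hO ▸ x.2) k
      obtain ⟨C, ⟨hC, hCc⟩, hCO⟩ :=
        (closed_nhds_basis (x : E)).mem_iff.1 ((hOo k).mem_nhds hxO)
      exact ⟨interior C, fun _ => ⟨isOpen_interior,
        ⟨x, mem_image_of_mem _ hx, mem_interior_iff_mem_nhds.2 hC⟩,
        (closure_minimal interior_subset hCc).trans hCO⟩⟩
    · exact ⟨∅, fun h => absurd h hB⟩
  choose V hV using hex
  exact hE ⟨_, michaelBetaWinning_transferStrat hσ hO (fun k B h => (hV k B h).1)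
    (fun k B h => (hV k B h).2.1) fun k B h => (hV k B h).2.2⟩
end
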